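/- Let G be a hyperbolic group, let H be a quasiconvex subgroup of G, and let x, y ∈ G with x of infinite order. Then xⁿ ∈ yHy⁻¹ for some n ∈ ℕ if and only if x^∞ ∈ Λ_G(yH), where x^∞ = lim_{n→∞} xⁿ ∈ ∂G. -/

import Mathlib

/-!
The word metric `d` is left invariant and proper (balls are finite), and its points are joined by
geodesics; hyperbolicity enters through the four point condition.

**A pigeonhole principle.** Both directions rest on it: if a family of elements indexed by `i ≤ N`
lies in a ball whose radius does not depend on `N`, then for large `N` two members coincide.

**From `xⁿ ∈ yHy⁻¹` to the limit set.** Here `xⁿʲ y ∈ yH` stays at distance `|y|` from `xⁿʲ`, so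
all that is needed is that `xⁿ` converges at infinity when `x` has infinite order
(`convAtInf_pow`). If `|u²| > |u| + 2δ` with some margin, the four point condition applied to
`1, u, u², uⁿ⁺²` shows inductively that `|uⁿ|` is strictly increasing, and then
`(uⁱ|uʲ)₁ ≥ (i - 1) / 2` for `i ≤ j` (`convAtInf_of_sq`). Some conjugate `u = g⁻¹ xⁱ g` has this
property (`exists_hyperbolic_conj`): for `g` deep inside a long geodesic `[1, xⁿ]`, each `xⁱ` with
`i ≤ N` translates `g` along that geodesic, and `x²ⁱ` translates it by about twice as much, so
`d(g, x²ⁱ g) ≥ 2 d(g, xⁱ g) - 14δ`. If the property failed for all `i`, the elements `g⁻¹ xⁱ g`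
would have length at most `16δ + 1`, contradicting the pigeonhole principle.

**From the limit set to `xⁿ ∈ yHy⁻¹`.** Let `y hⱼ → x^∞`. For a point `g` far out on a geodesic
`[1, xᵐ]` with `m` large, each translate `xⁱ g`, `i ≤ N`, lies on `[xⁱ, xⁱ⁺ᵐ]`, hence near
`[y, y hₘ]`, hence, by quasiconvexity, within a distance independent of `N` of `yH`
(`exists_near_coset`). By the pigeonhole principle `(xⁱ g)⁻¹ y h = (xʲ g)⁻¹ y h'` for some `i < j`
and `h, h' ∈ H`, and then `xʲ⁻ⁱ = y h' h⁻¹ y⁻¹`.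
-/

open Set Pointwise

namespace HypPaper

variable {G : Type*} [Group G]

/-- The distance between `g` and `h` in the Cayley graph of `G` with respect to the
(symmetrized) generating set `T`, i.e. the word metric: the least length of a word in
`T ∪ T⁻¹` carrying `g` to `h`. -/
noncomputable def wdist (T : Set G) (g h : G) : ℕ :=
  sInf {n : ℕ | ∃ l : List G, l.length = n ∧ (∀ x ∈ l, x ∈ T ∨ x⁻¹ ∈ T) ∧ g * l.prod = h}

/-- The Gromov product `(x|y)_w` with respect to a distance function `d`. -/
noncomputable def gp (d : G → G → ℕ) (w x y : G) : ℝ :=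
  ((d w x : ℝ) + (d w y : ℝ) - (d x y : ℝ)) / 2

/-- Gromov hyperbolicity of the metric `d` (Gromov's four point condition, which for the
word metric of a Cayley graph is equivalent to the `δ`-slimness of all geodesic triangles). -/
def IsHypDist (d : G → G → ℕ) : Prop :=
  ∃ δ : ℝ, 0 ≤ δ ∧ ∀ w x y z : G,
    min (gp d w x z) (gp d w y z) - δ ≤ gp d w x y

/-- A group is hyperbolic if its Cayley graph with respect to some (equivalently, any)
finite generating set is Gromov hyperbolic. -/
def IsHyperbolicGroup (G : Type*) [Group G] : Prop :=
  ∃ S : Finset G, Subgroup.closure (S : Set G) = ⊤ ∧ IsHypDist (wdist (S : Set G))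

/-- A group is virtually cyclic if it has a cyclic subgroup of finite index.
A hyperbolic group is nonelementary iff it is not virtually cyclic. -/
def VirtuallyCyclic (G : Type*) [Group G] : Prop :=
  ∃ C : Subgroup G, C.index ≠ 0 ∧ IsCyclic C

/-- `p 0, p 1, ..., p n` is the vertex sequence of a geodesic (w.r.t. `d`). -/
def IsGeodesicSeq (d : G → G → ℕ) (n : ℕ) (p : ℕ → G) : Prop :=
  ∀ i j : ℕ, i ≤ j → j ≤ n → d (p i) (p j) = j - i

/-- A subset `A` is quasiconvex w.r.t. the metric `d`: there is `k ≥ 0` such that every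
geodesic joining two points of `A` lies in the `k`-neighborhood of `A`. -/
def IsQuasiconvex (d : G → G → ℕ) (A : Set G) : Prop :=
  ∃ k : ℕ, ∀ (n : ℕ) (p : ℕ → G), IsGeodesicSeq d n p → p 0 ∈ A → p n ∈ A →
    ∀ i ≤ n, ∃ a ∈ A, d (p i) a ≤ k

/-- A subgroup `H` of `G` is weakly malnormal if it is infinite and `H ∩ gHg⁻¹` is finite
for every `g ∈ G \ H`. -/
def WeaklyMalnormal (H : Subgroup G) : Prop :=
  (H : Set G).Infinite ∧ ∀ g : G, g ∉ H →
    ((H ⊓ ConjAct.toConjAct g • H : Subgroup G) : Set G).Finite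

/-- A sequence in `G` converging at infinity: Gromov products `(aᵢ|aⱼ)₁ → ∞`. -/
def ConvAtInf (d : G → G → ℕ) (a : ℕ → G) : Prop :=
  ∀ M : ℝ, ∃ N : ℕ, ∀ i ≥ N, ∀ j ≥ N, M ≤ gp d 1 (a i) (a j)

/-- Two sequences converge to the same point at infinity: `(aᵢ|bⱼ)₁ → ∞`. -/
def SeqEquiv (d : G → G → ℕ) (a b : ℕ → G) : Prop :=
  ∀ M : ℝ, ∃ N : ℕ, ∀ i ≥ N, ∀ j ≥ N, M ≤ gp d 1 (a i) (b j)

/-- Sequences converging at infinity. -/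
def BSeq (G : Type*) [Group G] (d : G → G → ℕ) := {a : ℕ → G // ConvAtInf d a}

/-- The (sequential) Gromov boundary `∂G` of `G` w.r.t. the word metric `d`:
equivalence classes of sequences converging at infinity. -/
def Boundary (G : Type*) [Group G] (d : G → G → ℕ) :=
  Quot (fun a b : BSeq G d => SeqEquiv d a.1 b.1)

/-- The boundary point determined by a sequence converging at infinity. -/
def toBoundary (d : G → G → ℕ) (b : BSeq G d) : Boundary G d :=
  Quot.mk _ b

/-- A basic neighborhood in the boundary: points which can be represented by a sequence
whose Gromov products with (a representative of) the given point eventually exceed `M`. -/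
def basicNbhd (d : G → G → ℕ) (a : BSeq G d) (M : ℝ) : Set (Boundary G d) :=
  {ξ | ∃ b : BSeq G d, toBoundary d b = ξ ∧
        ∃ N : ℕ, ∀ i ≥ N, ∀ j ≥ N, M ≤ gp d 1 (a.1 i) (b.1 j)}

/-- The standard topology on the Gromov boundary. -/
instance (d : G → G → ℕ) : TopologicalSpace (Boundary G d) :=
  TopologicalSpace.generateFrom {U | ∃ a M, U = basicNbhd d a M}

/-- The limit set `Λ(A) ⊆ ∂G` of a subset `A ⊆ G`: boundary points which are limits of
sequences of points of `A`. -/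
def limitSet (d : G → G → ℕ) (A : Set G) : Set (Boundary G d) :=
  {ξ | ∃ b : BSeq G d, (∀ n, b.1 n ∈ A) ∧ toBoundary d b = ξ}

/-- The properties of the word metric of a finitely generated group that the argument uses:
it is a left-invariant, proper pseudometric in which any two points are joined by a geodesic. -/
structure IsWordMetric (d : G → G → ℕ) : Prop where
  self : ∀ a, d a a = 0
  symm : ∀ a b, d a b = d b a
  tri : ∀ a b c, d a c ≤ d a b + d b c
  inv : ∀ c a b, d (c * a) (c * b) = d a b
  ball : ∀ n : ℕ, {g : G | d 1 g ≤ n}.Finite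
  geod : ∀ a b, ∃ p : ℕ → G, IsGeodesicSeq d (d a b) p ∧ p 0 = a ∧ p (d a b) = b

/-! ### The word metric -/

lemma wdist_le_length {T : Set G} (g : G) {l : List G} (hl : ∀ x ∈ l, x ∈ T ∨ x⁻¹ ∈ T) :
    wdist T g (g * l.prod) ≤ l.length :=
  Nat.sInf_le ⟨l, rfl, hl, rfl⟩

lemma exists_word {T : Set G} (hT : Subgroup.closure T = ⊤) (g : G) :
    ∃ l : List G, (∀ x ∈ l, x ∈ T ∨ x⁻¹ ∈ T) ∧ l.prod = g := by
  have h : g ∈ (Subgroup.closure T).toSubmonoid := by rw [hT]; trivial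
  rw [Subgroup.closure_toSubmonoid] at h
  simpa using Submonoid.exists_list_of_mem_closure h

lemma exists_word_length_eq_wdist {T : Set G} (hT : Subgroup.closure T = ⊤) (g h : G) :
    ∃ l : List G, l.length = wdist T g h ∧ (∀ x ∈ l, x ∈ T ∨ x⁻¹ ∈ T) ∧ g * l.prod = h := by
  obtain ⟨l, hl, hp⟩ := exists_word hT (g⁻¹ * h)
  exact Nat.sInf_mem (s := {n : ℕ | ∃ l : List G, l.length = n ∧
    (∀ x ∈ l, x ∈ T ∨ x⁻¹ ∈ T) ∧ g * l.prod = h}) ⟨_, l, rfl, hl, by rw [hp]; group⟩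

lemma wdist_tri {T : Set G} (hT : Subgroup.closure T = ⊤) (a b c : G) :
    wdist T a c ≤ wdist T a b + wdist T b c := by
  obtain ⟨l, hl, hm, hp⟩ := exists_word_length_eq_wdist hT a b
  obtain ⟨l', hl', hm', hp'⟩ := exists_word_length_eq_wdist hT b c
  have h := wdist_le_length (T := T) a (l := l ++ l') (by
    intro x hx
    rcases List.mem_append.1 hx with hx | hx
    exacts [hm x hx, hm' x hx])
  rw [List.prod_append, ← mul_assoc, hp, hp', List.length_append] at h
  omega

lemma wdist_symm_le {T : Set G} (hT : Subgroup.closure T = ⊤) (a b : G) :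
    wdist T b a ≤ wdist T a b := by
  obtain ⟨l, hl, hm, hp⟩ := exists_word_length_eq_wdist hT a b
  have h := wdist_le_length (T := T) b (l := (l.map (·⁻¹)).reverse) (by
    intro x hx
    simp only [List.mem_reverse, List.mem_map] at hx
    obtain ⟨y, hy, rfl⟩ := hx
    rw [inv_inv]
    exact (hm y hy).symm)
  rw [← List.prod_inv_reverse, ← hp] at h
  simp only [mul_inv_cancel_right, List.length_reverse, List.length_map] at h
  rw [hl, hp] at h
  exact h

lemma wdist_inv (T : Set G) (c a b : G) : wdist T (c * a) (c * b) = wdist T a b := by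
  simp only [wdist, mul_assoc, mul_right_inj]

lemma wdist_ball {T : Set G} (hfin : T.Finite) (hT : Subgroup.closure T = ⊤) (n : ℕ) :
    {g : G | wdist T 1 g ≤ n}.Finite := by
  have hU : (T ∪ T⁻¹).Finite := hfin.union hfin.inv
  have hpow : ∀ k : ℕ, ((T ∪ T⁻¹) ^ k).Finite := by
    intro k
    induction k with
    | zero => simp
    | succ k ih => rw [pow_succ]; exact ih.mul hU
  have key : ∀ l : List G, (∀ x ∈ l, x ∈ T ∨ x⁻¹ ∈ T) → l.prod ∈ (T ∪ T⁻¹) ^ l.length := by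
    intro l
    induction l with
    | nil => intro _; simp
    | cons a l ih =>
      intro h
      rw [List.prod_cons, List.length_cons, pow_succ']
      refine Set.mul_mem_mul ?_ (ih fun x hx => h x (List.mem_cons_of_mem _ hx))
      simpa using h a List.mem_cons_self
  refine ((Set.finite_Iic n).biUnion fun k _ => hpow k).subset ?_
  intro g hg
  obtain ⟨l, hl, hm, hp⟩ := exists_word_length_eq_wdist hT 1 g
  rw [one_mul] at hp
  refine Set.mem_biUnion (x := l.length) ?_ (hp ▸ key l hm)
  rw [hl]
  exact hg

lemma wdist_geod {T : Set G} (hT : Subgroup.closure T = ⊤) (a b : G) :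
    ∃ p : ℕ → G, IsGeodesicSeq (wdist T) (wdist T a b) p ∧ p 0 = a ∧ p (wdist T a b) = b := by
  obtain ⟨l, hl, hm, hp⟩ := exists_word_length_eq_wdist hT a b
  have hend : a * (l.take (wdist T a b)).prod = b := by rw [← hl, List.take_length, hp]
  refine ⟨fun i => a * (l.take i).prod, ?_, by simp, hend⟩
  have upper : ∀ i j, i ≤ j →
      wdist T (a * (l.take i).prod) (a * (l.take j).prod) ≤ j - i := by
    intro i j hij
    have h := wdist_le_length (T := T) (a * (l.take i).prod) (l := (l.take j).drop i)
      fun x hx => hm x (List.mem_of_mem_take (List.mem_of_mem_drop hx))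
    have e : l.take i = (l.take j).take i := by rw [List.take_take, min_eq_left hij]
    rw [mul_assoc, e, List.prod_take_mul_prod_drop, ← e] at h
    refine h.trans ?_
    rw [List.length_drop, List.length_take]
    omega
  intro i j hij hj
  simp only
  refine le_antisymm (upper i j hij) ?_
  -- a shortcut between two vertices would shorten the whole minimal word
  have h1 := upper 0 i (Nat.zero_le _)
  have h2 := upper j _ hj
  have h3 := wdist_tri hT (a * (l.take 0).prod) (a * (l.take i).prod)
    (a * (l.take (wdist T a b)).prod)
  have h4 := wdist_tri hT (a * (l.take i).prod) (a * (l.take j).prod)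
    (a * (l.take (wdist T a b)).prod)
  have h5 : wdist T (a * (l.take 0).prod) (a * (l.take (wdist T a b)).prod) = wdist T a b := by
    rw [hend]; simp
  omega

lemma isWordMetric_wdist {T : Set G} (hfin : T.Finite) (hT : Subgroup.closure T = ⊤) :
    IsWordMetric (wdist T) where
  self a := by simpa using wdist_le_length (T := T) a (l := []) (by simp)
  symm a b := le_antisymm (wdist_symm_le hT b a) (wdist_symm_le hT a b)
  tri := wdist_tri hT
  inv := wdist_inv T
  ball := wdist_ball hfin hT
  geod := wdist_geod hT

namespace IsWordMetric

variable {d : G → G → ℕ}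

lemma triR (hd : IsWordMetric d) (a b c : G) : (d a c : ℝ) ≤ d a b + d b c := by
  exact_mod_cast hd.tri a b c

lemma symmR (hd : IsWordMetric d) (a b : G) : (d a b : ℝ) = d b a := by
  rw [hd.symm]

lemma exists_point (hd : IsWordMetric d) (a b : G) {s : ℕ} (hs : s ≤ d a b) :
    ∃ g, d a g = s ∧ (d g b : ℝ) = d a b - s := by
  obtain ⟨p, hp, h0, hn⟩ := hd.geod a b
  refine ⟨p s, ?_, ?_⟩
  · have := hp 0 s (Nat.zero_le _) hs
    rwa [h0] at this
  · have := hp s _ hs le_rfl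
    rw [hn] at this
    rw [this, Nat.cast_sub hs]

/-- Pigeonhole in a ball of fixed radius: the number of elements that force a repetition depends
on the radius only. -/
lemma pigeonhole (hd : IsWordMetric d) (C : ℕ) :
    ∃ N : ℕ, ∀ f : ℕ → G, (∀ i ≤ N, d 1 (f i) ≤ C) → ∃ i j, i < j ∧ f i = f j := by
  refine ⟨(hd.ball C).toFinset.card, fun f hf => ?_⟩
  obtain ⟨i, -, j, -, hij, he⟩ := Finset.exists_ne_map_eq_of_card_lt_of_maps_to
    (s := Finset.range ((hd.ball C).toFinset.card + 1)) (t := (hd.ball C).toFinset) (f := f)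
    (by simp) (by
      intro i hi
      have hi : i < _ := Finset.mem_range.1 hi
      simpa using hf i (by omega))
  rcases lt_or_gt_of_ne hij with h | h
  exacts [⟨i, j, h, he⟩, ⟨j, i, h, he.symm⟩]

lemma exists_lt_pow (hd : IsWordMetric d) {x : G} (hx : ¬ IsOfFinOrder x) (R : ℕ) :
    ∃ n : ℕ, R < d 1 (x ^ n) := by
  by_contra! h
  obtain ⟨N, hN⟩ := hd.pigeonhole R
  obtain ⟨i, j, hij, he⟩ := hN (fun n => x ^ n) fun i _ => h i
  exact hij.ne ((injective_pow_iff_not_isOfFinOrder.2 hx) he)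

lemma exists_pow_bound (d : G → G → ℕ) (x : G) (N : ℕ) : ∃ M : ℕ, ∀ i ≤ N, d 1 (x ^ i) ≤ M :=
  ⟨(Finset.range (N + 1)).sup fun i => d 1 (x ^ i), fun i hi =>
    Finset.le_sup (f := fun i => d 1 (x ^ i)) (Finset.mem_range.2 (by omega))⟩

/-! ### Consequences of the four point condition -/

/-- The Gromov product inequality, written as a comparison of the three sums of opposite sides. -/
lemma four_point (hd : IsWordMetric d) {δ : ℝ}
    (hδ : ∀ w x y z : G, min (gp d w x z) (gp d w y z) - δ ≤ gp d w x y) (x y z w : G) :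
    (d x y + d z w : ℝ) ≤ d x z + d y w + 2 * δ ∨
      (d x y + d z w : ℝ) ≤ d y z + d x w + 2 * δ := by
  have h := hδ w x y z
  have h1 := hd.symmR w x
  have h2 := hd.symmR w y
  have h3 := hd.symmR w z
  rcases min_choice (gp d w x z) (gp d w y z) with e | e <;> rw [e] at h <;>
    simp only [gp] at h
  · left; linarith
  · right; linarith

lemma gp_comm (hd : IsWordMetric d) (w a b : G) : gp d w a b = gp d w b a := by
  simp only [gp, hd.symm a b]; ring

lemma gp_perturb (hd : IsWordMetric d) (w a b a' b' : G) :
    gp d w a b - d a a' - d b b' ≤ gp d w a' b' := by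
  have h1 := hd.triR w a' a
  have h2 := hd.triR w b' b
  have h3 := hd.triR a' a b'
  have h4 := hd.triR a b b'
  have h5 := hd.symmR a a'
  have h6 := hd.symmR b b'
  simp only [gp]
  linarith

/-- A point `q` on a geodesic `[a, b]` stays close to `[a', b']` as long as the endpoints were
moved only far away from `q`. -/
lemma gp_transfer (hd : IsWordMetric d) {δ : ℝ} (hδ0 : 0 ≤ δ)
    (hδ : ∀ w x y z : G, min (gp d w x z) (gp d w y z) - δ ≤ gp d w x y) {q a b a' b' : G}
    (h0 : gp d q a b = 0) (h1 : 2 * δ < gp d q a a') (h2 : 2 * δ < gp d q b b') :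
    gp d q a' b' ≤ 2 * δ := by
  by_contra! h
  have e1 := hδ q a b b'
  have e2 := hδ q a b' a'
  rw [h0] at e1
  rw [hd.gp_comm q b' a'] at e2
  have : 2 * δ - δ < gp d q a b' := by
    have := lt_min h1 h
    linarith
  have : δ < min (gp d q a b') (gp d q b b') := lt_min (by linarith) (by linarith)
  linarith

/-- Distance from a point to a geodesic, in terms of the Gromov product of the endpoints. -/
lemma dist_geodesic_le (hd : IsWordMetric d) {δ : ℝ}
    (hδ : ∀ w x y z : G, min (gp d w x z) (gp d w y z) - δ ≤ gp d w x y) (q a : G) {n : ℕ}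
    {p : ℕ → G} (hp : IsGeodesicSeq d n p) (h0 : p 0 = a) :
    ∃ i ≤ n, (d q (p i) : ℝ) ≤ gp d q a (p n) + 2 * δ + 1 := by
  have hn : d a (p n) = n := by rw [← h0, hp 0 n (Nat.zero_le _) le_rfl, Nat.sub_zero]
  have hnR : (d a (p n) : ℝ) = n := by exact_mod_cast hn
  have t1 := hd.triR a q (p n)
  have t2 := hd.triR a (p n) q
  have t3 := hd.triR q a (p n)
  have s1 := hd.symmR a q
  have s2 := hd.symmR q (p n)
  -- the parameter of the comparison point is the integer part of `(q | p n)_a`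
  have hpos : 0 ≤ gp d a q (p n) := by simp only [gp]; linarith
  have f1 := Nat.floor_le hpos
  have f2 := Nat.lt_floor_add_one (gp d a q (p n))
  set s := ⌊gp d a q (p n)⌋₊
  have hs : s ≤ n := by
    have : (s : ℝ) ≤ n := f1.trans (by simp only [gp]; linarith)
    exact_mod_cast this
  refine ⟨s, hs, ?_⟩
  have e1 : (d a (p s) : ℝ) = s := by
    have := hp 0 s (Nat.zero_le _) hs
    rw [h0] at this
    simp [this]
  have e2 : (d (p s) (p n) : ℝ) = n - s := by
    rw [hp s n hs le_rfl, Nat.cast_sub hs]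
  have s3 := hd.symmR (p s) (p n)
  have s4 := hd.symmR q (p s)
  simp only [gp] at f1 f2 ⊢
  rcases hd.four_point hδ a (p n) q (p s) with h | h <;> linarith [hd.symmR (p n) q]

/-! ### Elements of infinite order converge at infinity -/

/-- If `u` moves the base point so that `|u²|` exceeds `|u|` by more than `2δ`, then `|uⁿ|` is
strictly increasing and `uⁿ` converges at infinity. -/
lemma convAtInf_of_sq (hd : IsWordMetric d) {δ : ℝ}
    (hδ : ∀ w x y z : G, min (gp d w x z) (gp d w y z) - δ ≤ gp d w x y) {u : G}
    (hu : (d 1 u : ℝ) + 2 * δ + 1 ≤ d 1 (u ^ 2)) : ConvAtInf d (fun n => u ^ n) := by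
  have hpow : ∀ i j, d (u ^ i) (u ^ (i + j)) = d 1 (u ^ j) := by
    intro i j
    have := hd.inv (u ^ i) 1 (u ^ j)
    rwa [mul_one, ← pow_add] at this
  have hstep : ∀ n, d 1 (u ^ n) ≤ d 1 (u ^ (n + 1)) → d 1 (u ^ (n + 1)) + 1 ≤ d 1 (u ^ (n + 2)) := by
    intro n hn
    have e1 : d u (u ^ (n + 2)) = d 1 (u ^ (n + 1)) := by
      have := hpow 1 (n + 1)
      rwa [pow_one, show 1 + (n + 1) = n + 2 by ring] at this
    have e2 : d (u ^ 2) (u ^ (n + 2)) = d 1 (u ^ n) := by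
      have := hpow 2 n
      rwa [add_comm 2 n] at this
    have e3 : d (u ^ 2) u = d 1 u := by
      have := hpow 1 1
      rw [pow_one] at this
      rw [hd.symm]
      exact this
    have hn' : (d 1 (u ^ n) : ℝ) ≤ d 1 (u ^ (n + 1)) := by exact_mod_cast hn
    have := hd.four_point hδ 1 (u ^ 2) u (u ^ (n + 2))
    rw [e1, e2, e3] at this
    have : (d 1 (u ^ (n + 1)) : ℝ) + 1 ≤ d 1 (u ^ (n + 2)) := by
      rcases this with h | h <;> linarith
    exact_mod_cast this
  have hmono : ∀ n, d 1 (u ^ n) ≤ d 1 (u ^ (n + 1)) := by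
    intro n
    induction n with
    | zero => simp [hd.self]
    | succ n ih => exact (Nat.le_succ _).trans (hstep n ih)
  have hadd : ∀ m n, d 1 (u ^ m) + n ≤ d 1 (u ^ (m + n)) + 1 := by
    intro m n
    induction n with
    | zero => simp
    | succ n ih =>
      rcases Nat.eq_zero_or_pos (m + n) with h | h
      · obtain ⟨rfl, rfl⟩ : m = 0 ∧ n = 0 := by omega
        simp [hd.self]
      · obtain ⟨k, hk⟩ : ∃ k, m + n = k + 1 := ⟨m + n - 1, by omega⟩
        have := hstep k (hmono k)
        rw [hk] at ih
        rw [show m + (n + 1) = k + 2 by omega]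
        omega
  have hgp : ∀ i j : ℕ, i ≤ j → (i : ℝ) - 1 ≤ 2 * gp d 1 (u ^ i) (u ^ j) := by
    intro i j hij
    obtain ⟨k, rfl⟩ := Nat.exists_eq_add_of_le hij
    have h1 : (d 1 (u ^ k) : ℝ) + i ≤ d 1 (u ^ (k + i)) + 1 := by exact_mod_cast hadd k i
    have h2 : (0 : ℝ) ≤ d 1 (u ^ i) := Nat.cast_nonneg _
    rw [add_comm k i] at h1
    simp only [gp, hpow]
    linarith
  intro M
  refine ⟨⌈2 * M + 1⌉₊, fun i hi j hj => ?_⟩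
  have hi' := Nat.ceil_le.1 hi
  have hj' := Nat.ceil_le.1 hj
  rcases le_total i j with h | h
  · have := hgp i j h
    simp only
    linarith
  · have := hgp j i h
    simp only
    rw [hd.gp_comm]
    linarith

/-- Some conjugate of a power of an infinite order element satisfies the hypothesis of
`convAtInf_of_sq`. Otherwise, for `g` deep inside a long geodesic `[1, xⁿ]`, the many distinct
elements `g⁻¹ xⁱ g` would all lie in a ball whose radius depends on `δ` only: each `xⁱ` moves `g`
along the geodesic, and by the same amount when it is applied twice. -/
lemma exists_hyperbolic_conj (hd : IsWordMetric d) {δ : ℝ} (hδ0 : 0 ≤ δ)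
    (hδ : ∀ w x y z : G, min (gp d w x z) (gp d w y z) - δ ≤ gp d w x y) {x : G}
    (hx : ¬ IsOfFinOrder x) :
    ∃ (g : G) (i : ℕ), (d 1 (g⁻¹ * x ^ i * g) : ℝ) + 2 * δ + 1 ≤ d 1 ((g⁻¹ * x ^ i * g) ^ 2) := by
  by_contra! hno
  obtain ⟨N, hN⟩ := hd.pigeonhole ⌈16 * δ + 1⌉₊
  obtain ⟨M, hM⟩ := exists_pow_bound d x N
  obtain ⟨s, hs⟩ := exists_nat_ge (3 * M + 10 * δ + 10 : ℝ)
  obtain ⟨n, hn⟩ := hd.exists_lt_pow hx (2 * s)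
  obtain ⟨g, hg1, hg2⟩ := hd.exists_point 1 (x ^ n) (s := s) (by omega)
  have hn' : (2 * s : ℝ) < d 1 (x ^ n) := by exact_mod_cast hn
  have hg1 : (d 1 g : ℝ) = s := by exact_mod_cast hg1
  obtain ⟨i, j, hij, he⟩ := hN (fun i => g⁻¹ * x ^ i * g) (by
    intro i hi
    have key : (d 1 (g⁻¹ * x ^ i * g) : ℝ) ≤ 16 * δ + 1 := by
      have hM' : (d 1 (x ^ i) : ℝ) ≤ M := by exact_mod_cast hM i hi
      have hno' := hno g i
      have c : x ^ i * x ^ n = x ^ n * x ^ i := by rw [← pow_add, ← pow_add, add_comm]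
      set X := x ^ i
      set z := x ^ n
      have i1 : d 1 (g⁻¹ * X * g) = d g (X * g) := by
        rw [← hd.inv g]; congr 1 <;> group
      have i2 : d 1 ((g⁻¹ * X * g) ^ 2) = d g (X * (X * g)) := by
        rw [← hd.inv g, pow_two]; congr 1 <;> group
      rw [i1, i2] at hno'
      rw [i1]
      have i3 : (d X (X * g) : ℝ) = s := by
        have := hd.inv X 1 g
        rw [mul_one] at this
        rw [this, hg1]
      have i4 : (d (X * g) (X * z) : ℝ) = d 1 z - s := by rw [hd.inv, hg2]
      have i5 : (d X (X * z) : ℝ) = d 1 z := by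
        have := hd.inv X 1 z
        rw [mul_one] at this
        rw [this]
      have i6 : (d z (X * z) : ℝ) ≤ M := by
        have := hd.inv z 1 X
        rw [mul_one] at this
        rw [c, this]
        exact hM'
      have i7 : d X⁻¹ g = d 1 (X * g) := by
        rw [← hd.inv X]; congr 1; group
      have i8 : d X⁻¹ (X * g) = d 1 (X * (X * g)) := by
        rw [← hd.inv X]; congr 1; group
      have i9 : (d X⁻¹ 1 : ℝ) ≤ M := by
        rw [← hd.inv X, mul_inv_cancel, mul_one]; exact hM'
      set q := X * g
      have M0 : (0 : ℝ) ≤ M := Nat.cast_nonneg _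
      -- `q` still lies near the geodesic `[1, z]`
      have near : gp d q 1 z ≤ 2 * δ := by
        refine hd.gp_transfer hδ0 hδ (a := X) (b := X * z) ?_ ?_ ?_
        · simp only [gp]
          rw [hd.symmR q X]; linarith
        · simp only [gp]
          linarith [hd.symmR q X, hd.symmR X 1, hd.triR X 1 q, hd.symmR 1 q]
        · simp only [gp]
          linarith [hd.symmR (X * z) z, hd.triR q z (X * z)]
      simp only [gp] at near
      have s1 := hd.symmR 1 q
      have s2 := hd.symmR z q
      have s3 := hd.symmR z g
      have t1 := hd.triR 1 X q
      have t2 := hd.triR X 1 q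
      have t2' := hd.symmR X 1
      have t3 := hd.triR 1 g (X * q)
      have t4 := hd.triR 1 (X * q) g
      have t4' := hd.symmR (X * q) g
      have t5 := hd.triR 1 X⁻¹ q
      have t5' := hd.symmR X⁻¹ 1
      rw [i8] at t5
      have A := hd.four_point hδ 1 z g q
      -- the displacement of `g` along the geodesic and that of `q` differ by at most `2δ`
      have B1 := hd.four_point hδ X⁻¹ g q 1
      have B2 := hd.four_point hδ X⁻¹ q g 1
      rw [i7, i8] at B1 B2
      have s4 := hd.symmR g 1
      have s5 := hd.symmR g q
      rcases A with A | A
      · rcases B2 with B2 | B2 <;> rcases B1 with B1 | B1 <;> linarith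
      · rcases B2 with B2 | B2 <;> rcases B1 with B1 | B1 <;> linarith
    have := key.trans (Nat.le_ceil _)
    exact_mod_cast this)
  have he : x ^ i = x ^ j := by simpa using he
  exact hij.ne ((injective_pow_iff_not_isOfFinOrder.2 hx) he)

lemma convAtInf_pow (hd : IsWordMetric d) {δ : ℝ} (hδ0 : 0 ≤ δ)
    (hδ : ∀ w x y z : G, min (gp d w x z) (gp d w y z) - δ ≤ gp d w x y) {x : G}
    (hx : ¬ IsOfFinOrder x) : ConvAtInf d (fun n => x ^ n) := by
  obtain ⟨g, i, h⟩ := hd.exists_hyperbolic_conj hδ0 hδ hx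
  have hi : 0 < i := by
    rcases Nat.eq_zero_or_pos i with rfl | hi
    · simp [hd.self] at h; linarith
    · exact hi
  have hc := hd.convAtInf_of_sq hδ h
  obtain ⟨K, hK⟩ := exists_pow_bound d x i
  -- `x ^ m` is within a bounded distance of `g * u ^ (m / i)`, where `u = g⁻¹ * x ^ i * g`
  have hclose : ∀ m, d (g * (g⁻¹ * x ^ i * g) ^ (m / i)) (x ^ m) ≤ d 1 g + K := by
    intro m
    have e : g * (g⁻¹ * x ^ i * g) ^ (m / i) = x ^ (i * (m / i)) * g := by
      have := conj_pow (i := m / i) (a := g⁻¹) (b := x ^ i)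
      rw [inv_inv] at this
      rw [this, ← pow_mul]; group
    rw [e]
    have e2 : x ^ m = x ^ (i * (m / i)) * x ^ (m % i) := by
      rw [← pow_add, Nat.div_add_mod]
    rw [e2, hd.inv]
    have h1 := hd.tri g 1 (x ^ (m % i))
    have h2 := hK (m % i) (Nat.mod_lt _ hi).le
    have h3 := hd.symm g 1
    omega
  intro R
  obtain ⟨N, hN⟩ := hc (R + 2 * (d 1 g + K) + d 1 g)
  refine ⟨i * N, fun a ha b hb => ?_⟩
  have h1 := hN (a / i) ((Nat.le_div_iff_mul_le hi).2 (by rw [mul_comm]; exact ha))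
    (b / i) ((Nat.le_div_iff_mul_le hi).2 (by rw [mul_comm]; exact hb))
  have h2 := hd.gp_perturb 1 (g * (g⁻¹ * x ^ i * g) ^ (a / i)) (g * (g⁻¹ * x ^ i * g) ^ (b / i))
    (x ^ a) (x ^ b)
  have h3 : (d (g * (g⁻¹ * x ^ i * g) ^ (a / i)) (x ^ a) : ℝ) ≤ d 1 g + K := by
    exact_mod_cast hclose a
  have h4 : (d (g * (g⁻¹ * x ^ i * g) ^ (b / i)) (x ^ b) : ℝ) ≤ d 1 g + K := by
    exact_mod_cast hclose b
  -- moving the base point from `g` to `1`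
  have h5 : gp d 1 ((g⁻¹ * x ^ i * g) ^ (a / i)) ((g⁻¹ * x ^ i * g) ^ (b / i)) - d 1 g ≤
      gp d 1 (g * (g⁻¹ * x ^ i * g) ^ (a / i)) (g * (g⁻¹ * x ^ i * g) ^ (b / i)) := by
    generalize (g⁻¹ * x ^ i * g) ^ (a / i) = v
    generalize (g⁻¹ * x ^ i * g) ^ (b / i) = w
    have e1 := hd.inv g 1 v
    have e2 := hd.inv g 1 w
    rw [mul_one] at e1 e2
    have e3 := hd.triR g 1 (g * v)
    have e4 := hd.triR g 1 (g * w)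
    have e5 := hd.symmR g 1
    simp only [gp, hd.inv]
    rw [e1] at e3
    rw [e2] at e4
    linarith
  simp only at h1 ⊢
  linarith

/-! ### Points at infinity -/

lemma seqEquiv_of_toBoundary_eq (hd : IsWordMetric d) {δ : ℝ}
    (hδ : ∀ w x y z : G, min (gp d w x z) (gp d w y z) - δ ≤ gp d w x y) {a b : BSeq G d}
    (h : toBoundary d a = toBoundary d b) : SeqEquiv d a.1 b.1 := by
  have h' := Quot.eqvGen_exact h
  clear h
  induction h' with
  | rel a b h => exact h
  | refl a => exact a.2
  | symm a b _ ih =>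
    intro M
    obtain ⟨N, hN⟩ := ih M
    exact ⟨N, fun i hi j hj => by rw [hd.gp_comm]; exact hN j hj i hi⟩
  | trans a b c _ _ h1 h2 =>
    intro M
    obtain ⟨N1, hN1⟩ := h1 (M + δ)
    obtain ⟨N2, hN2⟩ := h2 (M + δ)
    refine ⟨max N1 N2, fun i hi j hj => ?_⟩
    have e1 := hN1 i (le_of_max_le_left hi) (max N1 N2) (le_max_left _ _)
    have e2 := hN2 (max N1 N2) (le_max_right _ _) j (le_of_max_le_right hj)
    rw [hd.gp_comm] at e2
    have := hδ 1 (a.1 i) (c.1 j) (b.1 (max N1 N2))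
    have := le_min e1 e2
    linarith

/-- If `x^∞` is a limit of points of `yH`, then a point `g` far out on a geodesic `[1, xᵐ]` has the
property that `xⁱ g` is uniformly close to `yH` for all `i ≤ N`. -/
lemma exists_near_coset (hd : IsWordMetric d) {δ : ℝ} (hδ0 : 0 ≤ δ)
    (hδ : ∀ w x y z : G, min (gp d w x z) (gp d w y z) - δ ≤ gp d w x y) {H : Subgroup G} {k : ℕ}
    (hk : ∀ (n : ℕ) (p : ℕ → G), IsGeodesicSeq d n p → p 0 ∈ (H : Set G) → p n ∈ (H : Set G) →
      ∀ i ≤ n, ∃ a ∈ (H : Set G), d (p i) a ≤ k) {x y : G}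
    (hc : ConvAtInf d (fun n => x ^ n)) {b : ℕ → G} (hb : ∀ n, b n ∈ H)
    (hxb : SeqEquiv d (fun n => x ^ n) (fun n => y * b n)) (N : ℕ) :
    ∃ g : G, ∀ i ≤ N, ∃ h ∈ H, (d (x ^ i * g) (y * h) : ℝ) ≤ 4 * δ + 1 + k := by
  obtain ⟨M, hM⟩ := exists_pow_bound d x N
  obtain ⟨t, ht⟩ := exists_nat_ge (2 * δ + 2 * M + d 1 y + 1 : ℝ)
  obtain ⟨m₁, hm₁⟩ := hc t
  obtain ⟨m₂, hm₂⟩ := hxb (t + M + 2 * δ + 1)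
  set m := max m₁ m₂
  have hL : (t : ℝ) ≤ d 1 (x ^ m) := by
    have := hm₁ m (le_max_left _ _) m (le_max_left _ _)
    simp only [gp, hd.self] at this
    push_cast at this
    linarith
  obtain ⟨g, hg1, hg2⟩ := hd.exists_point 1 (x ^ m) (s := t) (by exact_mod_cast hL)
  have hg1 : (d 1 g : ℝ) = t := by exact_mod_cast hg1
  refine ⟨g, fun i hi => ?_⟩
  have hM' : (d 1 (x ^ i) : ℝ) ≤ M := by exact_mod_cast hM i hi
  have e1 : (d (x ^ i) (x ^ i * g) : ℝ) = t := by
    have := hd.inv (x ^ i) 1 g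
    rw [mul_one] at this
    rw [this, hg1]
  have e2 : (d (x ^ i * g) (x ^ (i + m)) : ℝ) = d 1 (x ^ m) - t := by
    rw [pow_add, hd.inv, hg2]
  have e3 : (d (x ^ i) (x ^ (i + m)) : ℝ) = d 1 (x ^ m) := by
    have := hd.inv (x ^ i) 1 (x ^ m)
    rw [mul_one] at this
    rw [pow_add, this]
  have e4 := hm₂ (i + m) (le_add_left (le_max_right m₁ m₂)) m (le_max_right _ _)
  simp only at e4
  set q := x ^ i * g
  have near : gp d q y (y * b m) ≤ 2 * δ := by
    refine hd.gp_transfer hδ0 hδ (a := x ^ i) (b := x ^ (i + m)) ?_ ?_ ?_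
    · simp only [gp]
      rw [hd.symmR q (x ^ i)]; linarith
    · simp only [gp]
      linarith [hd.symmR q (x ^ i), hd.symmR (x ^ i) 1, hd.triR (x ^ i) 1 y,
        hd.triR (x ^ i) 1 q, hd.triR 1 y q, hd.symmR y q]
    · simp only [gp] at e4 ⊢
      linarith [hd.triR 1 (x ^ i) q, hd.triR 1 q (x ^ (i + m)), hd.triR 1 q (y * b m)]
  obtain ⟨p, hp, hp0, hpn⟩ := hd.geod 1 (b m)
  have hyp : IsGeodesicSeq d (d 1 (b m)) (fun j => y * p j) := by
    intro j l hjl hl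
    simp only [hd.inv]
    exact hp j l hjl hl
  obtain ⟨j, hj, hqj⟩ := hd.dist_geodesic_le hδ q y hyp (by simp [hp0])
  obtain ⟨h, hh, hjh⟩ := hk _ p hp (by rw [hp0]; exact H.one_mem) (by rw [hpn]; exact hb m) j hj
  refine ⟨h, hh, ?_⟩
  simp only [hpn] at hqj
  have h1 := hd.triR q (y * p j) (y * h)
  have h2 : (d (y * p j) (y * h) : ℝ) ≤ k := by
    rw [hd.inv]; exact_mod_cast hjh
  linarith

end IsWordMetric

/-- Let `G` be a hyperbolic group, `H` a quasiconvex subgroup, and `x, y ∈ G` with `x` of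
infinite order.  Then `xⁿ ∈ yHy⁻¹` for some `n ≥ 1` if and only if
`x^∞ ∈ Λ_G(yH)`, where `x^∞` is the boundary point determined by the sequence `n ↦ xⁿ`. -/
theorem power_in_conjugate_iff_limit_in_limitSet
    {G : Type*} [Group G] (S : Finset G)
    (hgen : Subgroup.closure (S : Set G) = ⊤)
    (hhyp : IsHypDist (wdist (S : Set G)))
    (H : Subgroup G)
    (hHqc : IsQuasiconvex (wdist (S : Set G)) (H : Set G))
    (x y : G) (hx : ¬ IsOfFinOrder x) :
    (∃ n : ℕ, 0 < n ∧ x ^ n ∈ ConjAct.toConjAct y • H) ↔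
      ∃ hc : ConvAtInf (wdist (S : Set G)) (fun n : ℕ => x ^ n),
        toBoundary (wdist (S : Set G)) ⟨fun n : ℕ => x ^ n, hc⟩ ∈
          limitSet (wdist (S : Set G)) (y • (H : Set G)) := by
  obtain ⟨δ, hδ0, hδ⟩ := hhyp
  have hd : IsWordMetric (wdist (S : Set G)) := isWordMetric_wdist S.finite_toSet hgen
  have mem_conj : ∀ z : G, z ∈ ConjAct.toConjAct y • H ↔ y⁻¹ * z * y ∈ H := by
    intro z
    rw [Subgroup.mem_pointwise_smul_iff_inv_smul_mem, ← ConjAct.toConjAct_inv,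
      ConjAct.toConjAct_smul, inv_inv]
  constructor
  · rintro ⟨n, hn, hmem⟩
    rw [mem_conj] at hmem
    have hc := hd.convAtInf_pow hδ0 hδ hx
    have hpert : ∀ u v : G, gp (wdist (S : Set G)) 1 u v - wdist (S : Set G) 1 y ≤
        gp (wdist (S : Set G)) 1 u (v * y) := by
      intro u v
      have h := hd.gp_perturb 1 u v u (v * y)
      have h' := hd.inv v 1 y
      rw [mul_one] at h'
      rw [hd.self, h'] at h
      push_cast at h
      linarith
    -- the sequence `x ^ (n * j) * y` lies in `yH` and fellow travels the powers of `x`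
    have hequiv : SeqEquiv (wdist (S : Set G)) (fun i => x ^ i) (fun j => x ^ (n * j) * y) := by
      intro M
      obtain ⟨N, hN⟩ := hc (M + wdist (S : Set G) 1 y)
      refine ⟨N, fun i hi j hj => ?_⟩
      have h1 := hN i hi (n * j) (hj.trans (Nat.le_mul_of_pos_left j hn))
      have h2 := hpert (x ^ i) (x ^ (n * j))
      simp only at h1 ⊢
      linarith
    have hconv : ConvAtInf (wdist (S : Set G)) (fun j => x ^ (n * j) * y) := by
      intro M
      obtain ⟨N, hN⟩ := hequiv (M + wdist (S : Set G) 1 y)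
      refine ⟨N, fun i hi j hj => ?_⟩
      have h1 := hN (n * i) (hi.trans (Nat.le_mul_of_pos_left i hn)) j hj
      have h2 := hpert (x ^ (n * j) * y) (x ^ (n * i))
      simp only at h1 ⊢
      rw [hd.gp_comm] at h1
      rw [hd.gp_comm]
      linarith
    refine ⟨hc, ⟨fun j => x ^ (n * j) * y, hconv⟩, fun j => ?_, ?_⟩
    · refine Set.mem_smul_set.2 ⟨(y⁻¹ * x ^ n * y) ^ j, H.pow_mem hmem j, ?_⟩
      have h := conj_pow (i := j) (a := y⁻¹) (b := x ^ n)
      rw [inv_inv] at h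
      rw [h, ← pow_mul, smul_eq_mul]
      group
    · exact (Quot.sound (r := fun a b : BSeq G (wdist (S : Set G)) => SeqEquiv _ a.1 b.1)
        (a := ⟨_, hc⟩) (b := ⟨_, hconv⟩) hequiv).symm
  · rintro ⟨hc, b, hb, hbx⟩
    obtain ⟨k, hk⟩ := hHqc
    choose c hcH hcb using fun n => Set.mem_smul_set.1 (hb n)
    have hequiv : SeqEquiv (wdist (S : Set G)) (fun n => x ^ n) (fun n => y * c n) := by
      have h := hd.seqEquiv_of_toBoundary_eq hδ hbx.symm
      have e : b.1 = fun n => y * c n := funext fun n => (hcb n).symm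
      rwa [e] at h
    obtain ⟨N, hN⟩ := hd.pigeonhole ⌈4 * δ + 1 + k⌉₊
    obtain ⟨g, hg⟩ := hd.exists_near_coset hδ0 hδ hk hc hcH hequiv N
    have hg' : ∀ i : ℕ, ∃ h ∈ H,
        i ≤ N → (wdist (S : Set G) (x ^ i * g) (y * h) : ℝ) ≤ 4 * δ + 1 + k := by
      intro i
      by_cases hi : i ≤ N
      · obtain ⟨h, hh, hle⟩ := hg i hi
        exact ⟨h, hh, fun _ => hle⟩
      · exact ⟨1, H.one_mem, fun h => absurd h hi⟩
    choose h hhH hle using hg'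
    obtain ⟨i, j, hij, he⟩ := hN (fun i => (x ^ i * g)⁻¹ * (y * h i)) (by
      intro i hi
      rw [← hd.inv (x ^ i * g), mul_one, mul_inv_cancel_left]
      have := (hle i hi).trans (Nat.le_ceil _)
      exact_mod_cast this)
    refine ⟨j - i, Nat.sub_pos_of_lt hij, ?_⟩
    rw [mem_conj]
    obtain ⟨l, rfl⟩ := Nat.exists_eq_add_of_le hij.le
    rw [Nat.add_sub_cancel_left]
    -- the coincidence reads `x ^ l * y * h i = y * h (i + l)`
    have he2 : x ^ l * (y * h i) = y * h (i + l) := by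
      simp only [add_comm i l, pow_add, mul_inv_rev, mul_assoc, mul_right_inj] at he
      rw [he, mul_inv_cancel_left, add_comm]
    have e : y⁻¹ * x ^ l * y = h (i + l) * (h i)⁻¹ := by
      rw [eq_mul_inv_iff_mul_eq, mul_assoc, mul_assoc, he2, inv_mul_cancel_left]
    rw [e]
    exact H.mul_mem (hhH _) (H.inv_mem (hhH _))

end HypPaper
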